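/- Let m be a positive integer, m' > 0, α > 0, and let γ > 0 satisfy m α γ < m'. Define O_{N,N}(β) = ∫₀^∞ f_G(x, m') (∫₀^{βx} f_G(y, m) dy) dx for β > 0. Then ∫₀^γ O_{N,N}(α t) dt = γ − (m'^{m'} / Γ(m')) Σ_{k=0}^{m−1} (Γ(k+m') (m α)^k γ^{k+1} / ((k+1)! · m'^{k+m'})) · ₂F₁(k+1, k+m'; k+2; −m α γ / m'), where ₂F₁(a, b; c; z) = Σ_{n=0}^∞ ((a)_n (b)_n / (c)_n) z^n / n! is the Gauss hypergeometric series (convergent since |−mαγ/m'| < 1) and (q)_n denotes the Pochhammer symbol. -/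

import Mathlib

open Real MeasureTheory intervalIntegral

/-- Unit-mean Nakagami-m (Gamma) density with shape parameter `s`. -/
noncomputable def fG (s x : ℝ) : ℝ :=
  if 0 < x then s ^ s * x ^ (s - 1) * Real.exp (-s * x) / Real.Gamma s else 0

/-- Outage probability `O_{N,N}(β)`: probability that a unit-mean Gamma variable of shape `m`
is less than `β` times an independent unit-mean Gamma variable of shape `m'`. -/
noncomputable def O_NN (m : ℕ) (m' : ℝ) (β : ℝ) : ℝ :=
  ∫ x in Set.Ioi (0 : ℝ), fG m' x * ∫ y in Set.Ioo 0 (β * x), fG (m : ℝ) y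

/-- The Gauss hypergeometric series `₂F₁(a, b; c; z)` (with Pochhammer symbols). -/
noncomputable def hyp2F1 (a b c z : ℝ) : ℝ :=
  ∑' n : ℕ,
    ((ascPochhammer ℝ n).eval a * (ascPochhammer ℝ n).eval b /
        (ascPochhammer ℝ n).eval c) * z ^ n / (Nat.factorial n : ℝ)

/-!
The distribution function of a Gamma variable of integer shape `m` and rate `m` is
`1 - e^{-my} ∑_{k<m} (my)^k / k!`. Averaging it over the other Gamma variable turns the `k`-th
summand into a Gamma integral, a multiple of `β ^ k * (m' + m β) ^ (-(k + m'))`. The integral of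
this over `0 ≤ β ≤ α γ` is, after rescaling to the unit interval, Euler's integral for
`₂F₁(k + 1, k + m'; k + 2; ·)`. It is evaluated by expanding the binomial series under the integral
sign; `m α γ < m'` keeps the range of integration inside the disc of convergence.
-/

lemma ascPochhammer_eval_mul_add {R : Type*} [CommSemiring R] (a : R) (n : ℕ) :
    (ascPochhammer R n).eval a * (a + n) = a * (ascPochhammer R n).eval (a + 1) := by
  rw [← ascPochhammer_succ_eval, ascPochhammer_succ_left]
  simp

lemma hasSum_one_sub_rpow_neg (b : ℝ) {x : ℝ} (hx : |x| < 1) :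
    HasSum (fun n : ℕ ↦ (ascPochhammer ℝ n).eval b / n.factorial * x ^ n) ((1 - x) ^ (-b)) := by
  have hseries := (one_div_one_sub_rpow_hasFPowerSeriesOnBall_zero b).hasSum (y := x)
    (by simpa [enorm_eq_nnnorm] using! hx)
  have hcoeff (n : ℕ) : Ring.choose (b + n - 1) n = (ascPochhammer ℝ n).eval b / n.factorial := by
    rw [← Ring.multichoose_eq, eq_div_iff (by positivity), mul_comm, ← nsmul_eq_mul,
      Ring.factorial_nsmul_multichoose_eq_ascPochhammer, Polynomial.ascPochhammer_smeval_eq_eval]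
  have hx1 : 0 ≤ 1 - x := by linarith [(abs_lt.1 hx).2]
  simpa only [FormalMultilinearSeries.ofScalars_apply_eq, hcoeff, smul_eq_mul, zero_add, one_div,
    ← rpow_neg hx1] using hseries

lemma hasSum_integral_rpow_mul_one_sub_mul_rpow_neg {a z : ℝ} (b : ℝ) (ha : 0 < a) (hz : |z| < 1) :
    HasSum
      (fun n : ℕ ↦ ∫ t in (0 : ℝ)..1,
        t ^ (a - 1) * ((ascPochhammer ℝ n).eval b / n.factorial * (z * t) ^ n))
      (∫ t in (0 : ℝ)..1, t ^ (a - 1) * (1 - z * t) ^ (-b)) := by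
  have hsummable : Summable fun n : ℕ ↦ ‖(ascPochhammer ℝ n).eval b / n.factorial * z ^ n‖ :=
    (hasSum_one_sub_rpow_neg b hz).summable.norm
  refine intervalIntegral.hasSum_integral_of_dominated_convergence
    (fun n t ↦ t ^ (a - 1) * ‖(ascPochhammer ℝ n).eval b / n.factorial * z ^ n‖)
    (fun n ↦ by fun_prop) (fun n ↦ .of_forall fun t ht ↦ ?_)
    (.of_forall fun t _ ↦ hsummable.mul_left _) ?_ (.of_forall fun t ht ↦ ?_)
  · obtain ⟨ht0, ht1⟩ : 0 < t ∧ t ≤ 1 := by simpa using ht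
    rw [mul_pow, ← mul_assoc (_ / _), norm_mul, norm_mul _ (t ^ n),
      norm_of_nonneg (rpow_nonneg ht0.le _), norm_of_nonneg (pow_nonneg ht0.le n)]
    gcongr
    exact mul_le_of_le_one_right (norm_nonneg _) (pow_le_one₀ ht0.le ht1)
  · simp only [tsum_mul_left]
    exact (intervalIntegral.intervalIntegrable_rpow' (by linarith)).mul_const _
  · obtain ⟨ht0, ht1⟩ : 0 < t ∧ t ≤ 1 := by simpa using ht
    have hzt : |z * t| < 1 := by
      rw [abs_mul, abs_of_pos ht0]
      exact (mul_le_of_le_one_right (abs_nonneg z) ht1).trans_lt hz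
    exact (hasSum_one_sub_rpow_neg b hzt).mul_left _

lemma integral_rpow_mul_mul_pow {a : ℝ} (ha : 0 < a) (C z : ℝ) (n : ℕ) :
    ∫ t in (0 : ℝ)..1, t ^ (a - 1) * (C * (z * t) ^ n) = C * z ^ n / (a + n) := by
  have hmerge : ∀ t ∈ Set.uIoc (0 : ℝ) 1,
      t ^ (a - 1) * (C * (z * t) ^ n) = C * z ^ n * t ^ (a - 1 + n) := fun t ht ↦ by
    have ht0 : 0 < t := by simpa using ht.1
    rw [rpow_add ht0, rpow_natCast, mul_pow]
    ring
  have han : a - 1 + n + 1 = a + n := by ring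
  have hpos : 0 < a + n := by positivity
  rw [intervalIntegral.integral_congr_ae (.of_forall hmerge), intervalIntegral.integral_const_mul,
    integral_rpow (.inl (by linarith)), han, one_rpow, zero_rpow hpos.ne', sub_zero, mul_one_div]

/-- The case `c = a + 1` of Euler's integral representation of `₂F₁(a, b; c; z)`. -/
lemma integral_rpow_mul_one_sub_mul_rpow_neg {a z : ℝ} (b : ℝ) (ha : 0 < a) (hz : |z| < 1) :
    ∫ t in (0 : ℝ)..1, t ^ (a - 1) * (1 - z * t) ^ (-b) = hyp2F1 a b (a + 1) z / a := by
  rw [← (hasSum_integral_rpow_mul_one_sub_mul_rpow_neg b ha hz).tsum_eq, hyp2F1, ← tsum_div_const]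
  refine tsum_congr fun n ↦ ?_
  have hratio := ascPochhammer_eval_mul_add a n
  have hden : (ascPochhammer ℝ n).eval (a + 1) ≠ 0 := (ascPochhammer_pos n _ (by linarith)).ne'
  have han : a + n ≠ 0 := by positivity
  rw [integral_rpow_mul_mul_pow ha]
  field_simp
  linear_combination -(ascPochhammer ℝ n).eval b * z ^ n * hratio

lemma integral_rpow_mul_add_mul_rpow_neg {a c d γ : ℝ} (b : ℝ) (ha : 0 < a) (hd : 0 < d)
    (hγ : 0 ≤ γ) (hlt : |c * γ| < d) :
    ∫ t in (0 : ℝ)..γ, t ^ (a - 1) * (d + c * t) ^ (-b) =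
      γ ^ a / (a * d ^ b) * hyp2F1 a b (a + 1) (-(c * γ) / d) := by
  have hz : |-(c * γ) / d| < 1 := by rwa [abs_div, abs_neg, abs_of_pos hd, div_lt_one hd]
  have hfactor : ∀ u ∈ Set.uIcc (0 : ℝ) 1, (γ * u) ^ (a - 1) * (d + c * (γ * u)) ^ (-b) =
      γ ^ (a - 1) * d ^ (-b) * (u ^ (a - 1) * (1 - -(c * γ) / d * u) ^ (-b)) := fun u hu ↦ by
    obtain ⟨hu0, hu1⟩ : 0 ≤ u ∧ u ≤ 1 := by simpa using hu
    have hnonneg : 0 ≤ 1 - -(c * γ) / d * u := by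
      linarith [mul_le_of_le_one_right (abs_nonneg (-(c * γ) / d)) hu1,
        mul_le_mul_of_nonneg_right (le_abs_self (-(c * γ) / d)) hu0]
    have hsplit : d + c * (γ * u) = d * (1 - -(c * γ) / d * u) := by field_simp; ring
    rw [hsplit, mul_rpow hγ hu0, mul_rpow hd.le hnonneg]
    ring
  have hpow : γ * γ ^ (a - 1) = γ ^ a := by
    rw [mul_comm, ← rpow_add_one' hγ (by simpa using ha.ne'), sub_add_cancel]
  have hsubst := intervalIntegral.mul_integral_comp_mul_left (a := 0) (b := 1) (c := γ)
    (f := fun t : ℝ ↦ t ^ (a - 1) * (d + c * t) ^ (-b))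
  rw [mul_zero, mul_one] at hsubst
  rw [← hsubst, intervalIntegral.integral_congr hfactor, intervalIntegral.integral_const_mul,
    integral_rpow_mul_one_sub_mul_rpow_neg b ha hz, ← hpow, rpow_neg hd.le]
  field_simp

lemma integral_pow_mul_add_mul_rpow_neg {c d γ : ℝ} (k : ℕ) (b : ℝ) (hd : 0 < d)
    (hγ : 0 ≤ γ) (hlt : |c * γ| < d) :
    ∫ t in (0 : ℝ)..γ, t ^ k * (d + c * t) ^ (-b) =
      γ ^ (k + 1) / ((k + 1) * d ^ b) * hyp2F1 (k + 1) b (k + 2) (-(c * γ) / d) := by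
  have hk : (k : ℝ) + 2 = k + 1 + 1 := by ring
  have hγk : γ ^ ((k : ℝ) + 1) = γ ^ (k + 1) := by exact_mod_cast rpow_natCast γ (k + 1)
  rw [hk, ← hγk, ← integral_rpow_mul_add_mul_rpow_neg b (by positivity) hd hγ hlt]
  simp only [add_sub_cancel_right, rpow_natCast]

lemma intervalIntegrable_pow_mul_add_mul_rpow {c d u v : ℝ} (k : ℕ) (b : ℝ)
    (hne : ∀ t ∈ Set.uIcc u v, d + c * t ≠ 0) :
    IntervalIntegrable (fun t ↦ t ^ k * (d + c * t) ^ b) volume u v :=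
  ContinuousOn.intervalIntegrable <| (continuousOn_pow k).mul <|
    ContinuousOn.rpow_const (by fun_prop) fun t ht ↦ .inl (hne t ht)

lemma hasDerivAt_sum_range_succ_pow_div_factorial {𝕜 : Type*} [NontriviallyNormedField 𝕜]
    [CharZero 𝕜] (n : ℕ) (x : 𝕜) :
    HasDerivAt (fun y : 𝕜 ↦ ∑ k ∈ Finset.range (n + 1), y ^ k / k.factorial)
      (∑ k ∈ Finset.range n, x ^ k / k.factorial) x := by
  simp only [Finset.sum_range_succ', pow_zero]
  refine (HasDerivAt.fun_sum fun k _ ↦ ?_).add_const _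
  convert! (hasDerivAt_pow (k + 1) x).div_const ((k + 1).factorial : 𝕜) using 1
  have hk : (k : 𝕜) + 1 ≠ 0 := by exact_mod_cast k.succ_ne_zero
  have hk' : (k.factorial : 𝕜) ≠ 0 := by exact_mod_cast k.factorial_ne_zero
  rw [Nat.factorial_succ, Nat.add_sub_cancel]
  push_cast
  field_simp

lemma integral_pow_div_factorial_mul_exp_neg (n : ℕ) (X : ℝ) :
    ∫ x in (0 : ℝ)..X, x ^ n / n.factorial * Real.exp (-x) =
      1 - Real.exp (-X) * ∑ k ∈ Finset.range (n + 1), X ^ k / k.factorial := by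
  have hderiv (x : ℝ) : HasDerivAt
      (fun y ↦ -(Real.exp (-y) * ∑ k ∈ Finset.range (n + 1), y ^ k / k.factorial))
      (x ^ n / n.factorial * Real.exp (-x)) x := by
    convert! ((hasDerivAt_neg x).exp.mul
      (hasDerivAt_sum_range_succ_pow_div_factorial n x)).neg using 1
    rw [Finset.sum_range_succ]
    ring
  have hzero : ∑ k ∈ Finset.range (n + 1), (0 : ℝ) ^ k / k.factorial = 1 := by
    simp [Finset.sum_range_succ']
  rw [intervalIntegral.integral_eq_sub_of_hasDerivAt (fun x _ ↦ hderiv x)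
    (Continuous.intervalIntegrable (by fun_prop) _ _), hzero, neg_zero, Real.exp_zero]
  ring

lemma fG_natCast_succ (n : ℕ) {y : ℝ} (hy : 0 < y) :
    fG (n + 1 : ℕ) y = (n + 1 : ℕ) *
      (((n + 1 : ℕ) * y) ^ n / n.factorial * Real.exp (-((n + 1 : ℕ) * y))) := by
  have hΓ : Gamma ((n + 1 : ℕ) : ℝ) = n.factorial := by
    rw [Nat.cast_succ, Gamma_nat_eq_factorial]
  have hexponent : ((n + 1 : ℕ) : ℝ) - 1 = n := by simp
  rw [fG, if_pos hy, hΓ, hexponent, rpow_natCast, rpow_natCast, mul_pow, pow_succ, neg_mul]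
  ring

lemma setIntegral_Ioo_fG_natCast {m : ℕ} (hm : 0 < m) {X : ℝ} (hX : 0 ≤ X) :
    ∫ y in Set.Ioo 0 X, fG m y =
      1 - Real.exp (-(m * X)) * ∑ k ∈ Finset.range m, (m * X) ^ k / k.factorial := by
  obtain ⟨n, rfl⟩ := Nat.exists_eq_add_one.2 hm
  rw [setIntegral_congr_fun measurableSet_Ioo fun y hy ↦ fG_natCast_succ n hy.1,
    ← integral_Ioc_eq_integral_Ioo, ← intervalIntegral.integral_of_le hX,
    intervalIntegral.integral_const_mul, intervalIntegral.mul_integral_comp_mul_left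
      (f := fun x : ℝ ↦ x ^ n / n.factorial * Real.exp (-x)),
    mul_zero, integral_pow_div_factorial_mul_exp_neg]

lemma fG_mul_rpow_mul_exp_neg (s p r : ℝ) {x : ℝ} (hx : 0 < x) :
    fG s x * (x ^ p * Real.exp (-(r * x))) =
      s ^ s / Gamma s * (x ^ (p + s - 1) * Real.exp (-((s + r) * x))) := by
  have hrpow : x ^ (p + s - 1) = x ^ p * x ^ (s - 1) := by rw [← rpow_add hx, add_sub_assoc]
  have hexp : Real.exp (-((s + r) * x)) = Real.exp (-s * x) * Real.exp (-(r * x)) := by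
    rw [← Real.exp_add]
    ring_nf
  rw [fG, if_pos hx, hrpow, hexp]
  ring

lemma integrableOn_fG_mul_rpow_mul_exp_neg {s p r : ℝ} (hp : 0 < p + s) (hr : 0 < s + r) :
    IntegrableOn (fun x ↦ fG s x * (x ^ p * Real.exp (-(r * x)))) (Set.Ioi 0) := by
  have hint := integrableOn_rpow_mul_exp_neg_mul_rpow (p := 1) (s := p + s - 1) (by linarith)
    one_pos hr
  simp only [rpow_one, neg_mul] at hint
  exact IntegrableOn.congr_fun (hint.const_mul _)
    (fun x hx ↦ (fG_mul_rpow_mul_exp_neg s p r hx).symm) measurableSet_Ioi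

lemma integral_fG_mul_rpow_mul_exp_neg {s p r : ℝ} (hp : 0 < p + s) (hr : 0 < s + r) :
    ∫ x in Set.Ioi (0 : ℝ), fG s x * (x ^ p * Real.exp (-(r * x))) =
      s ^ s / Gamma s * (Gamma (p + s) * (s + r) ^ (-(p + s))) := by
  rw [setIntegral_congr_fun measurableSet_Ioi fun x hx ↦ fG_mul_rpow_mul_exp_neg s p r hx,
    MeasureTheory.integral_const_mul, integral_rpow_mul_exp_neg_mul_Ioi hp hr, one_div,
    inv_rpow hr.le, ← rpow_neg hr.le, mul_comm (Gamma _)]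

lemma integrableOn_fG {s : ℝ} (hs : 0 < s) : IntegrableOn (fG s) (Set.Ioi 0) := by
  simpa using integrableOn_fG_mul_rpow_mul_exp_neg (s := s) (p := 0) (r := 0) (by simpa) (by simpa)

lemma integral_fG {s : ℝ} (hs : 0 < s) : ∫ x in Set.Ioi (0 : ℝ), fG s x = 1 := by
  have hmoment := integral_fG_mul_rpow_mul_exp_neg (s := s) (p := 0) (r := 0) (by simpa) (by simpa)
  have hΓ := (Gamma_pos_of_pos hs).ne'
  have hpow := (rpow_pos_of_pos hs s).ne'
  simp only [rpow_zero, zero_mul, neg_zero, Real.exp_zero, mul_one, zero_add, add_zero,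
    rpow_neg hs.le] at hmoment
  rw [hmoment]
  field_simp

lemma O_NN_eq_one_sub_sum {m : ℕ} (hm : 0 < m) {m' β : ℝ} (hm' : 0 < m') (hβ : 0 ≤ β) :
    O_NN m m' β = 1 - m' ^ m' / Gamma m' * ∑ k ∈ Finset.range m,
      Gamma (k + m') * m ^ k / k.factorial * (β ^ k * (m' + m * β) ^ (-(k + m'))) := by
  have hexpand : ∀ x ∈ Set.Ioi (0 : ℝ), fG m' x * ∫ y in Set.Ioo 0 (β * x), fG m y =
      fG m' x - ∑ k ∈ Finset.range m, (m * β) ^ k / k.factorial *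
        (fG m' x * (x ^ (k : ℝ) * Real.exp (-(m * β * x)))) := fun x hx ↦ by
    have hx0 : 0 < x := hx
    rw [setIntegral_Ioo_fG_natCast hm (by positivity), mul_sub, mul_one, Finset.mul_sum,
      Finset.mul_sum]
    congr 1
    refine Finset.sum_congr rfl fun k _ ↦ ?_
    rw [rpow_natCast, ← mul_assoc (m : ℝ), mul_pow _ x]
    ring
  have hrate : 0 < m' + m * β := by positivity
  have hint : ∀ k ∈ Finset.range m, IntegrableOn (fun x ↦ (m * β) ^ k / k.factorial *
      (fG m' x * (x ^ (k : ℝ) * Real.exp (-(m * β * x))))) (Set.Ioi 0) := fun k _ ↦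
    (integrableOn_fG_mul_rpow_mul_exp_neg (by positivity) hrate).const_mul _
  rw [O_NN, setIntegral_congr_fun measurableSet_Ioi hexpand,
    MeasureTheory.integral_sub (integrableOn_fG hm') (integrable_finsetSum _ hint),
    integral_fG hm', MeasureTheory.integral_finsetSum _ hint, Finset.mul_sum]
  congr 1
  refine Finset.sum_congr rfl fun k _ ↦ ?_
  rw [MeasureTheory.integral_const_mul,
    integral_fG_mul_rpow_mul_exp_neg (by positivity) hrate]
  ring

lemma integral_O_NN {m : ℕ} (hm : 0 < m) {m' B : ℝ} (hm' : 0 < m') (hB : 0 ≤ B)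
    (hlt : m * B < m') :
    ∫ β in (0 : ℝ)..B, O_NN m m' β = B - m' ^ m' / Gamma m' * ∑ k ∈ Finset.range m,
      Gamma (k + m') * m ^ k * B ^ (k + 1) / ((k + 1).factorial * m' ^ (k + m')) *
        hyp2F1 (k + 1) (k + m') (k + 2) (-(m * B) / m') := by
  have hnonneg : ∀ β ∈ Set.uIcc 0 B, 0 ≤ β := fun β hβ ↦ (Set.uIcc_of_le hB ▸ hβ).1
  have hint : ∀ k ∈ Finset.range m, IntervalIntegrable (fun β : ℝ ↦
      Gamma (k + m') * m ^ k / k.factorial * (β ^ k * (m' + m * β) ^ (-(k + m'))))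
      volume 0 B := fun k _ ↦
    (intervalIntegrable_pow_mul_add_mul_rpow k _ fun β hβ ↦ by
      have hβ0 := hnonneg β hβ
      positivity).const_mul _
  have hsum := (IntervalIntegrable.sum _ hint).const_mul (m' ^ m' / Gamma m')
  simp only [Finset.sum_fn] at hsum
  have habs : |m * B| < m' := by rwa [abs_of_nonneg (by positivity)]
  rw [intervalIntegral.integral_congr fun β hβ ↦ O_NN_eq_one_sub_sum hm hm' (hnonneg β hβ),
    intervalIntegral.integral_sub intervalIntegrable_const hsum, integral_one, sub_zero,
    intervalIntegral.integral_const_mul, intervalIntegral.integral_finsetSum hint]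
  congr! 3 with k
  rw [intervalIntegral.integral_const_mul,
    integral_pow_mul_add_mul_rpow_neg k _ hm' hB habs, Nat.factorial_succ]
  push_cast
  field_simp

/-- Theorem 1, closed form of `H_N(α, γ) = ∫₀^γ O_{N,N}(α t) dt` (NLoS interference case). -/
theorem H_N_closed_form
    (m : ℕ) (hm : 0 < m) (m' α γ : ℝ) (hm' : 0 < m') (hα : 0 < α) (hγ : 0 < γ)
    (hlt : (m : ℝ) * α * γ < m') :
    (∫ t in (0 : ℝ)..γ, O_NN m m' (α * t)) =
      γ - (m' ^ m' / Real.Gamma m') *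
        ∑ k ∈ Finset.range m,
          (Real.Gamma ((k : ℝ) + m') * ((m : ℝ) * α) ^ k * γ ^ (k + 1) /
              ((Nat.factorial (k + 1) : ℝ) * m' ^ ((k : ℝ) + m'))) *
            hyp2F1 ((k : ℝ) + 1) ((k : ℝ) + m') ((k : ℝ) + 2) (-((m : ℝ) * α * γ) / m') := by
  have hαγ : (m : ℝ) * (α * γ) < m' := by rwa [← mul_assoc]
  rw [intervalIntegral.integral_comp_mul_left _ hα.ne', mul_zero,
    integral_O_NN hm hm' (by positivity) hαγ, smul_eq_mul, mul_sub, inv_mul_cancel_left₀ hα.ne',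
    mul_left_comm, Finset.mul_sum]
  congr! 3 with k
  rw [← mul_assoc (m : ℝ), mul_pow α, mul_pow _ α]
  field_simp
  ring
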